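/- Let α_1, …, α_{n+1} be nonnegative integers, all even, and set β_j := (α_j + 1)/2 for each j. Then ∫_{S^n} (ω^1)^{α_1} (ω^2)^{α_2} ⋯ (ω^{n+1})^{α_{n+1}} dσ(ω) = 2 Γ(β_1) Γ(β_2) ⋯ Γ(β_{n+1}) / Γ(β_1 + β_2 + ⋯ + β_{n+1}), where Γ is the Gamma function. -/

import Mathlib

open MeasureTheory

/-!
Integrate `(∏ j, |x j| ^ α j) * exp (-‖x‖ ^ 2)` over the whole space in two ways. In Cartesian
coordinates it splits into one-dimensional Gaussian moments, each a value of `Γ`. In polar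
coordinates, since the monomial is homogeneous, it is the spherical moment times a single radial
Gaussian moment, which is half a value of `Γ`. The identity follows by comparing the two.
-/

open Set Metric Module

section Polar

variable {E F : Type*} [NormedAddCommGroup F] [NormedSpace ℝ F]

lemma integral_volumeIoiPow (n : ℕ) (f : ℝ → F) :
    ∫ r : Ioi (0 : ℝ), f r ∂Measure.volumeIoiPow n = ∫ r in Ioi (0 : ℝ), r ^ n • f r := by
  have measurable_density : Measurable fun r : Ioi (0 : ℝ) ↦ Real.toNNReal ((r : ℝ) ^ n) :=
    (measurable_subtype_coe.pow_const n).real_toNNReal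
  calc
    _ = ∫ r : Ioi (0 : ℝ), Real.toNNReal ((r : ℝ) ^ n) • f r ∂volume.comap Subtype.val := by
      simp only [Measure.volumeIoiPow, ENNReal.ofReal]
      rw [integral_withDensity_eq_integral_smul measurable_density]
    _ = ∫ r in Ioi (0 : ℝ), Real.toNNReal (r ^ n) • f r :=
      integral_subtype_comap measurableSet_Ioi fun r ↦ Real.toNNReal (r ^ n) • f r
    _ = ∫ r in Ioi (0 : ℝ), r ^ n • f r :=
      setIntegral_congr_fun measurableSet_Ioi fun r hr ↦ by
        rw [NNReal.smul_def, Real.coe_toNNReal _ (pow_nonneg (le_of_lt hr) n)]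

variable [NormedAddCommGroup E] [NormedSpace ℝ E] [FiniteDimensional ℝ E] [Nontrivial E]
  [MeasurableSpace E] [BorelSpace E] (μ : Measure E) [μ.IsAddHaarMeasure]

lemma integral_eq_integral_toSphere_prod_volumeIoiPow (f : E → F) :
    ∫ x, f x ∂μ = ∫ p : sphere (0 : E) 1 × Ioi (0 : ℝ), f ((p.2 : ℝ) • (p.1 : E))
      ∂μ.toSphere.prod (.volumeIoiPow (finrank ℝ E - 1)) := by
  calc
    ∫ x, f x ∂μ = ∫ x : ({0}ᶜ : Set E), f x ∂μ.comap (↑) := by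
      rw [integral_subtype_comap (measurableSet_singleton _).compl, restrict_compl_singleton]
    _ = _ := by
      rw [← μ.measurePreserving_homeomorphUnitSphereProd.integral_comp
        (Homeomorph.measurableEmbedding _)]
      refine integral_congr_ae (.of_forall fun x ↦ ?_)
      have norm_ne_zero : ‖(x : E)‖ ≠ 0 := norm_ne_zero_iff.2 x.2
      simp only [homeomorphUnitSphereProd_apply_fst_coe, homeomorphUnitSphereProd_apply_snd_coe,
        smul_inv_smul₀ norm_ne_zero]

lemma integral_homogeneous_smul_fun_norm {f : E → ℝ} {s : ℝ}
    (hf : ∀ r : ℝ, 0 < r → ∀ x, f (r • x) = r ^ s * f x) (g : ℝ → F) :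
    ∫ x, f x • g ‖x‖ ∂μ =
      (∫ ω : sphere (0 : E) 1, f ω ∂μ.toSphere) •
        ∫ r in Ioi (0 : ℝ), r ^ (finrank ℝ E + s - 1) • g r := by
  have separated (p : sphere (0 : E) 1 × Ioi (0 : ℝ)) :
      f ((p.2 : ℝ) • (p.1 : E)) • g ‖(p.2 : ℝ) • (p.1 : E)‖ =
        f p.1 • ((p.2 : ℝ) ^ s • g p.2) := by
    have hr : 0 < (p.2 : ℝ) := p.2.2
    rw [hf _ hr, norm_smul, norm_eq_of_mem_sphere, mul_one, Real.norm_of_nonneg hr.le, smul_smul,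
      mul_comm]
  have radial_exponent (r : ℝ) (hr : 0 < r) :
      r ^ (finrank ℝ E - 1) * r ^ s = r ^ (finrank ℝ E + s - 1) := by
    rw [← Real.rpow_natCast, ← Real.rpow_add hr, Nat.cast_pred finrank_pos, sub_add_eq_add_sub]
  simp only [integral_eq_integral_toSphere_prod_volumeIoiPow μ, separated]
  rw [integral_prod_smul (fun ω : sphere (0 : E) 1 ↦ f ω)
    (fun r : Ioi (0 : ℝ) ↦ (r : ℝ) ^ s • g r), integral_volumeIoiPow _ fun r ↦ r ^ s • g r]
  congr 1
  refine setIntegral_congr_fun measurableSet_Ioi fun r hr ↦ ?_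
  rw [smul_smul, radial_exponent r hr]

lemma integral_homogeneous_mul_exp_neg_norm_sq {f : E → ℝ} {s : ℝ}
    (hf : ∀ r : ℝ, 0 < r → ∀ x, f (r • x) = r ^ s * f x) (hs : 0 < finrank ℝ E + s) :
    ∫ x, f x * Real.exp (-‖x‖ ^ 2) ∂μ =
      (∫ ω : sphere (0 : E) 1, f ω ∂μ.toSphere) *
        (Real.Gamma ((finrank ℝ E + s) / 2) / 2) := by
  have radial_moment : ∫ r in Ioi (0 : ℝ), r ^ (finrank ℝ E + s - 1) * Real.exp (-r ^ 2) =
      Real.Gamma ((finrank ℝ E + s) / 2) / 2 := by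
    have gamma_integral :=
      integral_rpow_mul_exp_neg_rpow two_pos (q := finrank ℝ E + s - 1) (by linarith)
    simp only [Real.rpow_two, sub_add_cancel] at gamma_integral
    rw [gamma_integral, one_div_mul_eq_div]
  have polar := integral_homogeneous_smul_fun_norm μ hf fun r ↦ Real.exp (-r ^ 2)
  simpa only [smul_eq_mul, radial_moment] using polar

end Polar

lemma integral_abs_rpow_mul_exp_neg_sq {a : ℝ} (ha : -1 < a) :
    ∫ x : ℝ, |x| ^ a * Real.exp (-x ^ 2) = Real.Gamma ((a + 1) / 2) := by
  have fold := integral_comp_abs (f := fun x ↦ x ^ a * Real.exp (-x ^ 2))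
  have half_line := integral_rpow_mul_exp_neg_rpow two_pos ha
  simp only [sq_abs] at fold
  simp only [Real.rpow_two] at half_line
  rw [fold, half_line]
  ring

section Cartesian

variable {ι : Type*} [Fintype ι]

lemma integral_prod_abs_rpow_mul_exp_neg_norm_sq {α : ι → ℝ} (hα : ∀ j, -1 < α j) :
    ∫ x : EuclideanSpace ℝ ι, (∏ j, |x j| ^ α j) * Real.exp (-‖x‖ ^ 2) =
      ∏ j, Real.Gamma ((α j + 1) / 2) := by
  have gaussian_factors (x : ι → ℝ) :
      (∏ j, |x j| ^ α j) * Real.exp (-‖WithLp.toLp 2 x‖ ^ 2) =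
        ∏ j, |x j| ^ α j * Real.exp (-x j ^ 2) := by
    simp only [EuclideanSpace.real_norm_sq_eq, ← Finset.sum_neg_distrib, Real.exp_sum,
      Finset.prod_mul_distrib]
  calc
    _ = ∫ x : ι → ℝ, (∏ j, |x j| ^ α j) * Real.exp (-‖WithLp.toLp 2 x‖ ^ 2) :=
      ((PiLp.volume_preserving_toLp ι).integral_comp
        (MeasurableEquiv.toLp 2 _).measurableEmbedding _).symm
    _ = ∏ j, ∫ x : ℝ, |x| ^ α j * Real.exp (-x ^ 2) := by
      simp only [gaussian_factors]
      exact integral_fintype_prod_volume_eq_prod fun j x ↦ |x| ^ α j * Real.exp (-x ^ 2)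
    _ = ∏ j, Real.Gamma ((α j + 1) / 2) :=
      Finset.prod_congr rfl fun j _ ↦ integral_abs_rpow_mul_exp_neg_sq (hα j)

lemma prod_abs_smul_rpow (α : ι → ℝ) {r : ℝ} (hr : 0 < r) (x : EuclideanSpace ℝ ι) :
    ∏ j, |(r • x) j| ^ α j = r ^ (∑ j, α j) * ∏ j, |x j| ^ α j := by
  simp only [PiLp.smul_apply, smul_eq_mul, abs_mul, abs_of_pos hr,
    Real.mul_rpow hr.le (abs_nonneg _), Finset.prod_mul_distrib, Real.rpow_sum_of_pos hr]

end Cartesian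

theorem sphere_moment_of_even_general {ι : Type*} [Fintype ι] [Nonempty ι] {α β : ι → ℝ}
    (hα : ∀ j, -1 < α j) (hβ : ∀ j, β j = (α j + 1) / 2) :
    ∫ ω : sphere (0 : EuclideanSpace ℝ ι) 1, (∏ j, |(ω : EuclideanSpace ℝ ι) j| ^ α j)
      ∂(volume : Measure (EuclideanSpace ℝ ι)).toSphere
      = (2 * ∏ j, Real.Gamma (β j)) / Real.Gamma (∑ j, β j) := by
  have sum_β : (finrank ℝ (EuclideanSpace ℝ ι) + ∑ j, α j) / 2 = ∑ j, β j := by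
    simp [hβ, ← Finset.sum_div, Finset.sum_add_distrib, add_comm]
  have sum_β_pos : 0 < ∑ j, β j :=
    Finset.sum_pos (fun j _ ↦ by linarith [hα j, hβ j]) Finset.univ_nonempty
  have polar := integral_homogeneous_mul_exp_neg_norm_sq
    (volume : Measure (EuclideanSpace ℝ ι)) (f := fun x ↦ ∏ j, |x j| ^ α j)
    (fun r hr ↦ prod_abs_smul_rpow α hr) (by linarith)
  simp only [integral_prod_abs_rpow_mul_exp_neg_norm_sq hα, sum_β, ← hβ] at polar
  rw [eq_div_iff (Real.Gamma_pos_of_pos sum_β_pos).ne', polar]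
  ring

/-- Even-exponent case of Folland's sphere-moment formula: if all exponents
`α j` are even, then, with `β j := (α j + 1)/2`, the monomial moment of the
surface measure on the unit sphere `S^n ⊂ ℝ^{n+1}` equals
`2 Γ(β 1) ⋯ Γ(β (n+1)) / Γ(β 1 + ⋯ + β (n+1))`. -/
theorem sphere_moment_of_even (n : ℕ) (hn : 1 ≤ n) (α : Fin (n + 1) → ℕ)
    (heven : ∀ j, Even (α j)) (β : Fin (n + 1) → ℝ)
    (hβ : ∀ j, β j = ((α j : ℝ) + 1) / 2) :
    ∫ ω : Metric.sphere (0 : EuclideanSpace ℝ (Fin (n + 1))) 1,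
        (∏ j, ((ω : EuclideanSpace ℝ (Fin (n + 1))) j) ^ α j)
      ∂((volume : Measure (EuclideanSpace ℝ (Fin (n + 1)))).toSphere)
      = (2 * ∏ j, Real.Gamma (β j)) / Real.Gamma (∑ j, β j) := by
  simpa only [Real.rpow_natCast, (heven _).pow_abs] using
    sphere_moment_of_even_general (fun j ↦ neg_one_lt_zero.trans_le (α j).cast_nonneg) hβ
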